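/- arXiv:1008.5314 — 2 statements merged into one kernel-verified Lean document; each statement's English description precedes it below -/
import Mathlib

section
/- Let I, J, N ⊂ R be homogeneous ideals with N ⊆ I ∩ J, and let A, B, C be monomial ideals with respect to a fixed term order σ such that C ⊆ in(J), A = in(N), B = in(I). Suppose H_J(d) = H_I(d-ℓ) + H_N(d) - H_N(d-ℓ) for all d (J is obtained from I via an elementary biliaison of height ℓ on N) and C = A + fB with f a monomial of degree ℓ satisfying A : f = A (C is a Basic Double Link of degree ℓ of B on A). Then C = in(J). -/
open MvPolynomial

variable {K : Type*} [Field K]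

/-- The leading exponent (multidegree) of a polynomial with respect to a monomial order. -/
noncomputable def leadExp {σ : Type*} (m : MonomialOrder σ) (p : MvPolynomial σ K) : σ →₀ ℕ :=
  m.toSyn.symm (p.support.sup fun e => m.toSyn e)

/-- The initial ideal of `I` with respect to a monomial order. -/
noncomputable def initialIdeal {σ : Type*} (m : MonomialOrder σ)
    (I : Ideal (MvPolynomial σ K)) : Ideal (MvPolynomial σ K) :=
  Ideal.span ((fun p => (MvPolynomial.monomial (leadExp m p) (1 : K))) ''
    {p | p ∈ I ∧ p ≠ 0})

/-- An ideal of a polynomial ring is homogeneous (w.r.t. the standard grading). -/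
def IsHomogeneousIdeal {n : ℕ} (I : Ideal (MvPolynomial (Fin n) K)) : Prop :=
  ∀ p ∈ I, ∀ d : ℕ, MvPolynomial.homogeneousComponent d p ∈ I

/-- The Hilbert function of the ideal `I` in degree `d ∈ ℤ`. -/
noncomputable def idealHilbert {n : ℕ}
    (I : Ideal (MvPolynomial (Fin n) K)) (d : ℤ) : ℕ :=
  if d < 0 then 0 else
    Module.finrank K
      ((Submodule.restrictScalars K I) ⊓ MvPolynomial.homogeneousSubmodule (Fin n) K d.toNat :
        Submodule K (MvPolynomial (Fin n) K))

/-- Degree `d` part of the set of leading exponents of `I`. -/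
def leadSet {n : ℕ} (m : MonomialOrder (Fin n)) (I : Ideal (MvPolynomial (Fin n) K)) (d : ℕ) :
    Set (Fin n →₀ ℕ) :=
  {a | a.degree = d ∧ ∃ p ∈ I, p ≠ 0 ∧ m.degree p = a}

lemma leadSet_finite {n : ℕ} (m : MonomialOrder (Fin n)) (I : Ideal (MvPolynomial (Fin n) K))
    (d : ℕ) : (leadSet m I d).Finite :=
  (Finsupp.finite_of_degree_le d).subset fun _ ha => ha.1.le

lemma leadSet_rep {n : ℕ} (m : MonomialOrder (Fin n)) (I : Ideal (MvPolynomial (Fin n) K))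
    (hI : IsHomogeneousIdeal I) (d : ℕ) (a : leadSet m I d) :
    ∃ p : ((Submodule.restrictScalars K I) ⊓ MvPolynomial.homogeneousSubmodule (Fin n) K d :
        Submodule K (MvPolynomial (Fin n) K)), (p : MvPolynomial (Fin n) K).coeff a ≠ 0 ∧
        ∀ b, m.toSyn a < m.toSyn b → (p : MvPolynomial (Fin n) K).coeff b = 0 := by
  obtain ⟨a, had, p, hp, hp0, rfl⟩ := a
  refine ⟨⟨homogeneousComponent d p, hI p hp d, homogeneousComponent_isHomogeneous d p⟩, ?_, ?_⟩
  · simp only [coeff_homogeneousComponent, had, if_true]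
    exact m.leadingCoeff_ne_zero_iff.mpr hp0
  · intro b hb
    simp only [coeff_homogeneousComponent, m.coeff_eq_zero_of_lt hb, ite_self]

lemma finrank_eq_leadSet {n : ℕ} (m : MonomialOrder (Fin n))
    (I : Ideal (MvPolynomial (Fin n) K)) (hI : IsHomogeneousIdeal I) (d : ℕ) :
    Module.finrank K
      ((Submodule.restrictScalars K I) ⊓ MvPolynomial.homogeneousSubmodule (Fin n) K d :
        Submodule K (MvPolynomial (Fin n) K)) = (leadSet m I d).ncard := by
  classical
  set V := ((Submodule.restrictScalars K I) ⊓ MvPolynomial.homogeneousSubmodule (Fin n) K d :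
        Submodule K (MvPolynomial (Fin n) K)) with hV
  haveI : Fintype (leadSet m I d) := (leadSet_finite m I d).fintype
  let φ : V →ₗ[K] (leadSet m I d → K) :=
    (LinearMap.pi fun a : leadSet m I d => MvPolynomial.lcoeff K (a : Fin n →₀ ℕ)) ∘ₗ V.subtype
  have hφ : Function.Injective φ := by
    rw [injective_iff_map_eq_zero]
    intro p hp
    by_contra h0
    have hp0 : (p : MvPolynomial (Fin n) K) ≠ 0 := fun h => h0 (Subtype.ext h)
    have hc : (p : MvPolynomial (Fin n) K).coeff (m.degree (p : MvPolynomial (Fin n) K)) ≠ 0 :=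
      m.leadingCoeff_ne_zero_iff.mpr hp0
    have hh : (p : MvPolynomial (Fin n) K).IsHomogeneous d := p.2.2
    have hd : (m.degree (p : MvPolynomial (Fin n) K)).degree = d := by
      have := hh hc
      rw [Finsupp.degree_eq_weight_one]
      exact this
    exact hc (congrFun hp ⟨_, hd, p, p.2.1, hp0, rfl⟩)
  haveI : Module.Finite K V := Module.Finite.of_injective φ hφ
  have hcard : (leadSet m I d).ncard = Fintype.card (leadSet m I d) := by
    rw [← Nat.card_coe_set_eq, Nat.card_eq_fintype_card]
  rw [hcard]
  apply le_antisymm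
  · simpa using LinearMap.finrank_le_finrank_of_injective hφ
  · choose q hq1 hq2 using leadSet_rep m I hI d
    have hli : LinearIndependent K q := by
      rw [Fintype.linearIndependent_iff]
      intro g hg
      by_contra! hne
      obtain ⟨i, hi⟩ := hne
      obtain ⟨a, ha, hmax⟩ := Finset.exists_max_image
        (Finset.univ.filter fun a : leadSet m I d => g a ≠ 0)
        (fun a => m.toSyn (a : Fin n →₀ ℕ)) ⟨i, by simpa using hi⟩
      have ha' : g a ≠ 0 := by simpa using ha
      have h := congrArg (fun p : V => MvPolynomial.lcoeff K (a : Fin n →₀ ℕ) (V.subtype p)) hg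
      simp only [map_sum, map_smul, map_zero] at h
      rw [Finset.sum_eq_single a] at h
      · simp only [smul_eq_mul, mul_eq_zero] at h
        exact h.elim ha' (hq1 a)
      · intro b _ hba
        by_cases hgb : g b = 0
        · simp [hgb]
        · have hle := hmax b (by simpa using hgb)
          have hlt : m.toSyn (b : Fin n →₀ ℕ) < m.toSyn (a : Fin n →₀ ℕ) :=
            lt_of_le_of_ne hle fun h => hba (Subtype.ext (m.toSyn.injective h))
          have h0 := hq2 b a hlt
          rw [smul_eq_mul]
          exact mul_eq_zero_of_right _ h0
      · simp
    exact hli.fintype_card_le_finrank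

lemma idealHilbert_nat {n : ℕ} (m : MonomialOrder (Fin n))
    (I : Ideal (MvPolynomial (Fin n) K)) (hI : IsHomogeneousIdeal I) (d : ℕ) :
    idealHilbert I (d : ℤ) = (leadSet m I d).ncard := by
  rw [← finrank_eq_leadSet m I hI d]
  simp [idealHilbert]

lemma monomial_mem_initialIdeal {n : ℕ} (m : MonomialOrder (Fin n))
    (I : Ideal (MvPolynomial (Fin n) K)) (a : Fin n →₀ ℕ) :
    MvPolynomial.monomial a (1 : K) ∈ initialIdeal m I ↔ a ∈ leadSet m I a.degree := by
  classical
  have himg : initialIdeal m I = Ideal.span ((fun s => MvPolynomial.monomial s (1 : K)) ''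
      ((fun p => m.degree p) '' {p | p ∈ I ∧ p ≠ 0})) := by
    rw [Set.image_image]; rfl
  rw [himg, MvPolynomial.mem_ideal_span_monomial_image]
  constructor
  · intro h
    obtain ⟨_, ⟨p, ⟨hp, hp0⟩, rfl⟩, hle⟩ := h a (by simp [coeff_monomial])
    refine ⟨rfl, MvPolynomial.monomial (a - m.degree p) 1 * p, I.mul_mem_left _ hp, ?_, ?_⟩
    · exact mul_ne_zero (by simp) hp0
    · rw [m.degree_mul (by simp) hp0, m.degree_monomial]
      simp only [one_ne_zero, if_false]
      exact tsub_add_cancel_of_le hle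
  · rintro ⟨-, p, hp, hp0, hpa⟩ b hb
    have : b = a := by
      by_contra hne
      rw [mem_support_iff, coeff_monomial, if_neg (Ne.symm hne)] at hb
      exact hb rfl
    subst this
    exact ⟨b, ⟨p, ⟨hp, hp0⟩, hpa⟩, le_rfl⟩

/-- **the key lemma.** Let `I, J, N` be homogeneous ideals with `N ⊆ I ∩ J`,
and let `A = in(N)`, `B = in(I)` and `C ⊆ in(J)` with `C = A + f·B` a Basic Double Link of
degree `ℓ`, where `f` is a monomial of degree `ℓ` with `A : f = A`.  If moreover
`H_J(d) = H_I(d-ℓ) + H_N(d) - H_N(d-ℓ)` for all `d` (elementary biliaison of height `ℓ`),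
then `C = in(J)`. -/
theorem basicDoubleLink_initialIdeal {n : ℕ} (m : MonomialOrder (Fin n))
    (I J N : Ideal (MvPolynomial (Fin n) K))
    (hI : IsHomogeneousIdeal I) (hJ : IsHomogeneousIdeal J) (hN : IsHomogeneousIdeal N)
    (hNI : N ≤ I) (hNJ : N ≤ J)
    (A B C : Ideal (MvPolynomial (Fin n) K))
    (hA : A = initialIdeal m N) (hB : B = initialIdeal m I)
    (hCJ : C ≤ initialIdeal m J)
    (ℓ : ℕ)
    (hHilb : ∀ d : ℤ, (idealHilbert J d : ℤ) =
      idealHilbert I (d - ℓ) + idealHilbert N d - idealHilbert N (d - ℓ))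
    (e : Fin n →₀ ℕ) (f : MvPolynomial (Fin n) K)
    (hf : f = MvPolynomial.monomial e (1 : K)) (hdeg : (e.sum fun _ v => v) = ℓ)
    (hcolon : Submodule.colon A (Ideal.span {f}) = A)
    (hC : C = A ⊔ Ideal.span {f} * B) :
    C = initialIdeal m J := by
  classical
  have hdeg' : e.degree = ℓ := by rw [← hdeg]; rfl
  refine le_antisymm hCJ ?_
  have hmem : ∀ (Q : Ideal (MvPolynomial (Fin n) K)) (a : Fin n →₀ ℕ) (d : ℕ), a ∈ leadSet m Q d →
      MvPolynomial.monomial a (1 : K) ∈ initialIdeal m Q := by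
    intro Q a d ha
    rw [monomial_mem_initialIdeal, ha.1]
    exact ha
  have hmem' : ∀ (Q : Ideal (MvPolynomial (Fin n) K)) (a : Fin n →₀ ℕ) (d : ℕ), a.degree = d →
      MvPolynomial.monomial a (1 : K) ∈ initialIdeal m Q → a ∈ leadSet m Q d := by
    intro Q a d hd ha
    rwa [monomial_mem_initialIdeal, hd] at ha
  -- exponents shifted by `e`
  have hAC : A ≤ C := hC ▸ le_sup_left
  have hfBC : ∀ a, MvPolynomial.monomial a (1 : K) ∈ B → MvPolynomial.monomial (e + a) (1 : K) ∈ C := by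
    intro a ha
    rw [hC]
    apply Ideal.mem_sup_right
    have : MvPolynomial.monomial (e + a) (1 : K) = f * MvPolynomial.monomial a (1 : K) := by
      rw [hf, monomial_mul, one_mul]
    rw [this]
    exact Ideal.mul_mem_mul (Ideal.mem_span_singleton_self f) ha
  have hcol : ∀ a, MvPolynomial.monomial (e + a) (1 : K) ∈ A → MvPolynomial.monomial a (1 : K) ∈ A := by
    intro a ha
    rw [← hcolon, Submodule.mem_colon]
    intro p hp
    obtain ⟨q, rfl⟩ := Ideal.mem_span_singleton'.mp hp
    have : MvPolynomial.monomial a (1 : K) • (q * f) = q * MvPolynomial.monomial (e + a) (1 : K) := by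
      have h2 : MvPolynomial.monomial (e + a) (1 : K) = f * MvPolynomial.monomial a (1 : K) := by
        rw [hf, monomial_mul, one_mul]
      rw [h2, smul_eq_mul]; ring
    rw [this]
    exact A.mul_mem_left _ ha
  have key : ∀ d, ∀ a ∈ leadSet m J d, MvPolynomial.monomial a (1 : K) ∈ C := by
    intro d
    have hd := hHilb d
    rw [idealHilbert_nat m J hJ, idealHilbert_nat m N hN] at hd
    by_cases hlt : d < ℓ
    · have hneg : (d : ℤ) - ℓ < 0 := by omega
      have h0 : ∀ Q : Ideal (MvPolynomial (Fin n) K), idealHilbert Q ((d : ℤ) - ℓ) = 0 := by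
        intro Q; simp only [idealHilbert, if_pos hneg]
      rw [h0, h0] at hd
      have hsub : leadSet m N d ⊆ leadSet m J d := fun a ⟨h1, p, hp, h2⟩ => ⟨h1, p, hNJ hp, h2⟩
      have heq := Set.eq_of_subset_of_ncard_le hsub (by omega) (leadSet_finite m J d)
      intro a ha
      rw [← heq] at ha
      exact hAC (hA ▸ hmem N a d ha)
    · obtain ⟨k, rfl⟩ := Nat.exists_eq_add_of_le (not_lt.mp hlt)
      have hk : ((ℓ + k : ℕ) : ℤ) - ℓ = (k : ℤ) := by push_cast; ring
      rw [hk, idealHilbert_nat m I hI, idealHilbert_nat m N hN] at hd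
      set S := (fun a => e + a) '' leadSet m I k with hS
      set T := (fun a => e + a) '' leadSet m N k with hT
      have hinj : Function.Injective (fun a : Fin n →₀ ℕ => e + a) := add_right_injective e
      have hSc : S.ncard = (leadSet m I k).ncard := Set.ncard_image_of_injective _ hinj
      have hTc : T.ncard = (leadSet m N k).ncard := Set.ncard_image_of_injective _ hinj
      have hSf : S.Finite := (leadSet_finite m I k).image _
      have hTf : T.Finite := (leadSet_finite m N k).image _
      have hint : leadSet m N (ℓ + k) ∩ S ⊆ T := by
        rintro _ ⟨h1, a, ha, rfl⟩
        refine ⟨a, hmem' N a k ha.1 ?_, rfl⟩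
        rw [← hA]
        apply hcol
        rw [hA]
        exact hmem N _ _ h1
      have hUC : ∀ a ∈ leadSet m N (ℓ + k) ∪ S, MvPolynomial.monomial a (1 : K) ∈ C := by
        rintro a (ha | ⟨b, hb, rfl⟩)
        · exact hAC (hA ▸ hmem N a _ ha)
        · exact hfBC b (hB ▸ hmem I b _ hb)
      have hUJ : leadSet m N (ℓ + k) ∪ S ⊆ leadSet m J (ℓ + k) := by
        intro a ha
        refine hmem' J a _ ?_ (hCJ (hUC a ha))
        rcases ha with ha | ⟨b, hb, rfl⟩
        · exact ha.1
        · simp only [map_add, hdeg', hb.1]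
      have hcard := Set.ncard_union_add_ncard_inter (leadSet m N (ℓ + k)) S
        (leadSet_finite m N _) hSf
      have hle := Set.ncard_le_ncard hint hTf
      have heq := Set.eq_of_subset_of_ncard_le hUJ (by omega) (leadSet_finite m J _)
      intro a ha
      rw [← heq] at ha
      exact hUC a ha
  rw [initialIdeal, Ideal.span_le]
  rintro _ ⟨p, ⟨hp, hp0⟩, rfl⟩
  exact key _ _ ⟨rfl, p, hp, hp0, rfl⟩
end

section
/- Let A ⊆ B be homogeneous ideals of R = K[x_0,...,x_n] with ht A = ht B - 1, and let f be homogeneous of degree d with A : f = A. Then the Basic Double Link C = A + fB satisfies ht C = ht B; moreover if B is unmixed and R/A is Cohen-Macaulay then C is unmixed. -/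
open MvPolynomial

variable {K : Type*} [Field K]

/-- The height of an ideal. -/
noncomputable def idealHeight {R : Type*} [CommRing R] (I : Ideal R) : ℕ∞ :=
  ⨅ (p : PrimeSpectrum R) (_ : I ≤ p.asIdeal), Order.height p

set_option synthInstance.maxHeartbeats 1000000 in
/-- `R/I` is Cohen-Macaulay: there is a regular sequence on `R/I`, consisting of elements of
the irrelevant maximal ideal, whose length equals the Krull dimension of `R/I`. -/
def QuotientIsCohenMacaulay {σ : Type*} (I : Ideal (MvPolynomial σ K)) : Prop :=
  ∃ rs : List (MvPolynomial σ K ⧸ I),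
    (∀ x ∈ rs, x ∈ (Ideal.span (Set.range (MvPolynomial.X : σ → MvPolynomial σ K))).map
      (Ideal.Quotient.mk I)) ∧
    RingTheory.Sequence.IsRegular (MvPolynomial σ K ⧸ I) rs ∧
    (rs.length : WithBot ℕ∞) = ringKrullDim (MvPolynomial σ K ⧸ I)

/-- An ideal is unmixed if all its associated primes have the same height, namely the height
of the ideal itself. -/
def IsUnmixed {n : ℕ} (I : Ideal (MvPolynomial (Fin n) K)) : Prop :=
  ∀ p ∈ associatedPrimes (MvPolynomial (Fin n) K) (MvPolynomial (Fin n) K ⧸ I),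
    idealHeight p = idealHeight I


open RingTheory.Sequence IsLocalRing
open scoped Pointwise

section LocalPart
universe u v
variable {S : Type u} [CommRing S]

/-- membership in `x • ⊤` -/
lemma bdl_mem_smul_top {M : Type*} [AddCommGroup M] [Module S M] (x : S) (m : M) :
    m ∈ x • (⊤ : Submodule S M) ↔ ∃ n, m = x • n := by
  rw [Submodule.mem_smul_pointwise_iff_exists]
  constructor
  · rintro ⟨n, -, h⟩; exact ⟨n, h.symm⟩
  · rintro ⟨n, h⟩; exact ⟨n, trivial, h.symm⟩

lemma bdl_regular_quot_iff {M : Type*} [AddCommGroup M] [Module S M] (x y : S) :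
    IsSMulRegular (QuotSMulTop x M) y ↔ ∀ m n : M, y • m = x • n → ∃ n', m = x • n' := by
  rw [isSMulRegular_iff_right_eq_zero_of_smul]
  constructor
  · intro h m n hmn
    have := h (Submodule.Quotient.mk m) (by
      rw [← Submodule.Quotient.mk_smul, Submodule.Quotient.mk_eq_zero, bdl_mem_smul_top]
      exact ⟨n, hmn⟩)
    rwa [Submodule.Quotient.mk_eq_zero, bdl_mem_smul_top] at this
  · intro h q hq
    obtain ⟨m, rfl⟩ := Submodule.Quotient.mk_surjective _ q
    rw [← Submodule.Quotient.mk_smul, Submodule.Quotient.mk_eq_zero, bdl_mem_smul_top] at hq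
    obtain ⟨n, hn⟩ := hq
    rw [Submodule.Quotient.mk_eq_zero, bdl_mem_smul_top]
    exact h m n hn

lemma bdl_swap {M : Type*} [AddCommGroup M] [Module S M] {x g : S}
    (hx : IsSMulRegular M x) (hg : IsSMulRegular (QuotSMulTop x M) g) :
    IsSMulRegular (QuotSMulTop g M) x := by
  rw [bdl_regular_quot_iff] at hg ⊢
  intro m n h
  obtain ⟨n', rfl⟩ := hg n m h.symm
  refine ⟨n', hx ?_⟩
  simp only
  rw [h, smul_comm]

/-- swapping two quotients -/
noncomputable def bdlSwapEquiv (M : Type*) [AddCommGroup M] [Module S M] (x y : S) :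
    QuotSMulTop y (QuotSMulTop x M) ≃ₗ[S] QuotSMulTop x (QuotSMulTop y M) :=
  have h : ∀ a b : S, b • (⊤ : Submodule S (QuotSMulTop a M)) =
      (b • (⊤ : Submodule S M)).map (a • (⊤ : Submodule S M)).mkQ := fun a b => by
    rw [Submodule.map_pointwise_smul, Submodule.map_top, Submodule.range_mkQ]
  Submodule.quotEquivOfEq _ _ (h x y) ≪≫ₗ Submodule.quotientQuotientEquivQuotientSup _ _ ≪≫ₗ
    Submodule.quotEquivOfEq _ _ (sup_comm _ _) ≪≫ₗ
    (Submodule.quotientQuotientEquivQuotientSup _ _).symm ≪≫ₗ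
    (Submodule.quotEquivOfEq _ _ (h y x)).symm

/-- existence of a weakly regular sequence of given length in `I`. -/
def BdlDepthGE (I : Ideal S) (s : ℕ) (M : Type v) [AddCommGroup M] [Module S M] : Prop :=
  ∃ rs : List S, rs.length = s ∧ (∀ r ∈ rs, r ∈ I) ∧ IsWeaklyRegular M rs

lemma BdlDepthGE.congr {I : Ideal S} {s : ℕ} {M N : Type*} [AddCommGroup M] [Module S M]
    [AddCommGroup N] [Module S N] (e : M ≃ₗ[S] N) (h : BdlDepthGE I s M) : BdlDepthGE I s N := by
  obtain ⟨rs, h1, h2, h3⟩ := h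
  exact ⟨rs, h1, h2, (e.isWeaklyRegular_congr rs).1 h3⟩

lemma BdlDepthGE.cons {I : Ideal S} {s : ℕ} {M : Type*} [AddCommGroup M] [Module S M] {x : S}
    (hx : x ∈ I) (hr : IsSMulRegular M x) (h : BdlDepthGE I s (QuotSMulTop x M)) :
    BdlDepthGE I (s + 1) M := by
  obtain ⟨rs, h1, h2, h3⟩ := h
  refine ⟨x :: rs, by simp [h1], ?_, (isWeaklyRegular_cons_iff _ _ _).2 ⟨hr, h3⟩⟩
  simpa [hx] using h2

lemma BdlDepthGE.exists_cons {I : Ideal S} {s : ℕ} {M : Type*} [AddCommGroup M] [Module S M]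
    (h : BdlDepthGE I (s + 1) M) :
    ∃ x ∈ I, IsSMulRegular M x ∧ BdlDepthGE I s (QuotSMulTop x M) := by
  obtain ⟨rs, h1, h2, h3⟩ := h
  cases rs with
  | nil => simp at h1
  | cons x rs =>
    rw [isWeaklyRegular_cons_iff] at h3
    simp only [List.length_cons, Nat.add_right_cancel_iff] at h1
    exact ⟨x, h2 x (by simp), h3.1, rs, h1, fun r hr => h2 r (by simp [hr]), h3.2⟩

lemma BdlDepthGE.zero {I : Ideal S} {M : Type*} [AddCommGroup M] [Module S M] :
    BdlDepthGE I 0 M := ⟨[], rfl, by simp, by simp⟩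

/-- an associated prime of `M/f` containing the regular element `x` is associated to `M/x`. -/
lemma bdl_ass_exchange [IsNoetherianRing S] {M : Type*} [AddCommGroup M] [Module S M] {x f : S}
    (hx : IsSMulRegular M x) (hf : IsSMulRegular M f) {P : Ideal S}
    (hP : P ∈ associatedPrimes S (QuotSMulTop f M)) (hxP : x ∈ P) :
    P ∈ associatedPrimes S (QuotSMulTop x M) := by
  rw [AssociatedPrimes.mem_iff, isAssociatedPrime_iff] at hP ⊢
  obtain ⟨hPp, q, hq⟩ := hP
  obtain ⟨u, rfl⟩ := Submodule.Quotient.mk_surjective _ q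
  have key : ∀ r, r ∈ P ↔ ∃ w, r • u = f • w := by
    intro r
    rw [hq, Submodule.mem_colon_singleton, Submodule.mem_bot, ← Submodule.Quotient.mk_smul,
      Submodule.Quotient.mk_eq_zero, bdl_mem_smul_top]
  obtain ⟨v, hv⟩ := (key x).1 hxP
  refine ⟨hPp, Submodule.Quotient.mk v, ?_⟩
  ext r
  rw [Submodule.mem_colon_singleton, Submodule.mem_bot, ← Submodule.Quotient.mk_smul,
      Submodule.Quotient.mk_eq_zero, bdl_mem_smul_top, key]
  constructor
  · rintro ⟨w, hw⟩
    refine ⟨w, hf ?_⟩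
    simp only
    rw [smul_comm f r, ← hv, smul_comm r x, hw, smul_comm]
  · rintro ⟨w, hw⟩
    refine ⟨w, hx ?_⟩
    simp only
    rw [smul_comm x r, hv, smul_comm r f, hw, smul_comm]

lemma bdl_notMem_of_regular [IsNoetherianRing S] {M : Type*} [AddCommGroup M] [Module S M] {x : S}
    (hx : IsSMulRegular M x) {P : Ideal S} (hP : P ∈ associatedPrimes S M) : x ∉ P := by
  intro h
  have : x ∈ ⋃ p ∈ associatedPrimes S M, (p : Set S) := Set.mem_biUnion hP h
  rw [biUnion_associatedPrimes_eq_zero_divisors] at this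
  obtain ⟨m, hm, h0⟩ := this
  exact hm (hx.right_eq_zero_of_smul h0)

lemma bdl_regular_of_notMem [IsNoetherianRing S] {M : Type*} [AddCommGroup M] [Module S M] {x : S}
    (h : ∀ P ∈ associatedPrimes S M, x ∉ P) : IsSMulRegular M x := by
  rw [isSMulRegular_iff_right_eq_zero_of_smul]
  intro m hm
  by_contra h0
  have : x ∈ ⋃ p ∈ associatedPrimes S M, (p : Set S) := by
    rw [biUnion_associatedPrimes_eq_zero_divisors]
    exact ⟨m, h0, hm⟩
  simp only [Set.mem_iUnion] at this
  obtain ⟨P, hP, hx⟩ := this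
  exact h P hP hx

/-- Dropping an arbitrary regular element lowers the depth by at most one. -/
lemma BdlDepthGE.quot [IsNoetherianRing S] [IsLocalRing S] (s : ℕ) :
    ∀ (M : Type v) [AddCommGroup M] [Module S M] [Module.Finite S M] (f : S),
      f ∈ maximalIdeal S → IsSMulRegular M f → BdlDepthGE (maximalIdeal S) (s + 1) M →
      BdlDepthGE (maximalIdeal S) s (QuotSMulTop f M) := by
  induction s with
  | zero => intros; exact BdlDepthGE.zero
  | succ t ih =>
    intro M _ _ _ f hfm hf hM
    obtain ⟨x, hxm, hx, hMx⟩ := hM.exists_cons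
    obtain ⟨y, hym, hy, -⟩ := hMx.exists_cons
    have hn1 : maximalIdeal S ∉ associatedPrimes S (QuotSMulTop x M) :=
      fun h => bdl_notMem_of_regular hy h hym
    have hn2 : maximalIdeal S ∉ associatedPrimes S (QuotSMulTop f M) :=
      fun h => hn1 (bdl_ass_exchange hx hf h hxm)
    obtain ⟨g, hgm, hg⟩ : ∃ g ∈ maximalIdeal S, ∀ P ∈ associatedPrimes S (QuotSMulTop x M) ∪
        associatedPrimes S (QuotSMulTop f M), g ∉ P := by
      by_contra! hcon
      have hsub : ((maximalIdeal S : Ideal S) : Set S) ⊆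
          ⋃ P ∈ associatedPrimes S (QuotSMulTop x M) ∪
        associatedPrimes S (QuotSMulTop f M), ((id P : Ideal S) : Set S) := by
        intro g hg
        obtain ⟨P, hP, hgP⟩ := hcon g hg
        exact Set.mem_biUnion hP hgP
      obtain ⟨P, hP, hle⟩ := (Ideal.subset_union_prime_finite ((associatedPrimes.finite S _).union
        (associatedPrimes.finite S _)) ⊤ ⊤
        (fun P hP _ _ => hP.elim (fun h => h.1) (fun h => h.1))).1 hsub
      have hPp : P.IsPrime := hP.elim (fun h => h.1) (fun h => h.1)
      have : maximalIdeal S = P := (maximalIdeal.isMaximal S).eq_of_le hPp.ne_top hle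
      subst this
      exact hP.elim hn1 hn2
    have hgx : IsSMulRegular (QuotSMulTop x M) g :=
      bdl_regular_of_notMem fun P hP => hg P (Or.inl hP)
    have hgf : IsSMulRegular (QuotSMulTop f M) g :=
      bdl_regular_of_notMem fun P hP => hg P (Or.inr hP)
    have h1 := (ih (QuotSMulTop x M) g hgm hgx hMx).congr (bdlSwapEquiv M x g)
    have h2 : BdlDepthGE (maximalIdeal S) (t + 1) (QuotSMulTop g M) :=
      BdlDepthGE.cons hxm (bdl_swap hx hgx) h1
    have h3 := (ih (QuotSMulTop g M) f hfm (bdl_swap hf hgf) h2).congr (bdlSwapEquiv M g f)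
    exact BdlDepthGE.cons hgm hgf h3

/-- depth is at most the coheight of any associated prime -/
lemma bdl_depth_le_coheight [IsNoetherianRing S] [IsLocalRing S] (s : ℕ) :
    ∀ (M : Type v) [AddCommGroup M] [Module S M] [Module.Finite S M]
      (P : PrimeSpectrum S), P.asIdeal ∈ associatedPrimes S M →
      BdlDepthGE (maximalIdeal S) s M → (s : ℕ∞) ≤ Order.coheight P := by
  induction s with
  | zero => intros; simp
  | succ t ih =>
    intro M _ _ _ P hP hM
    obtain ⟨x, hxm, hx, hMx⟩ := hM.exists_cons
    have hxP : x ∉ P.asIdeal := bdl_notMem_of_regular hx hP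
    -- the submodule killed by `P`
    let N : Submodule S M :=
      { carrier := {m | ∀ r ∈ P.asIdeal, r • m = 0}
        add_mem' := fun ha hb r hr => by rw [smul_add, ha r hr, hb r hr, add_zero]
        zero_mem' := fun r _ => smul_zero r
        smul_mem' := fun c m hm r hr => by rw [smul_comm, hm r hr, smul_zero] }
    have hNmem : ∀ m, m ∈ N ↔ ∀ r ∈ P.asIdeal, r • m = 0 := fun m => Iff.rfl
    have hN0 : N ≠ ⊥ := by
      obtain ⟨hp, u, hu⟩ := (isAssociatedPrime_iff.1 hP)
      intro h0
      have : u ∈ N := by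
        intro r hr
        rw [hu, Submodule.mem_colon_singleton] at hr
        simpa using hr
      rw [h0, Submodule.mem_bot] at this
      apply hp.ne_top
      rw [hu, this, Ideal.eq_top_iff_one, Submodule.mem_colon_singleton]
      simp
    obtain ⟨m, hmN, hmx⟩ : ∃ m ∈ N, m ∉ x • (⊤ : Submodule S M) := by
      by_contra! hcon
      apply hN0
      refine Submodule.eq_bot_of_le_smul_of_le_jacobson_bot (Ideal.span {x}) N
        (IsNoetherian.noetherian N) ?_ ?_
      · intro m hm
        obtain ⟨n, rfl⟩ := (bdl_mem_smul_top _ _).1 (hcon m hm)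
        refine Submodule.smul_mem_smul (Ideal.mem_span_singleton_self x) ?_
        intro r hr
        apply hx.right_eq_zero_of_smul
        rw [smul_comm]
        exact hm r hr
      · rw [Ideal.span_singleton_le_iff_mem]
        rw [IsLocalRing.jacobson_eq_maximalIdeal _ bot_ne_top]
        exact hxm
    have hne : (Submodule.Quotient.mk m : QuotSMulTop x M) ≠ 0 := by
      rwa [Ne, Submodule.Quotient.mk_eq_zero]
    obtain ⟨Q, hQ, hle⟩ := exists_le_isAssociatedPrime_of_isNoetherianRing S _ hne
    have hPQ : P.asIdeal ≤ Q := by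
      intro r hr
      apply hle
      rw [Submodule.mem_colon_singleton, ← Submodule.Quotient.mk_smul, hmN r hr]
      simp
    have hxQ : x ∈ Q := by
      apply hle
      rw [Submodule.mem_colon_singleton, ← Submodule.Quotient.mk_smul, Submodule.mem_bot,
        Submodule.Quotient.mk_eq_zero, bdl_mem_smul_top]
      exact ⟨m, rfl⟩
    have hlt : P < (⟨Q, hQ.isPrime⟩ : PrimeSpectrum S) := by
      refine lt_of_le_of_ne hPQ ?_
      rintro rfl
      exact hxP hxQ
    have := ih (QuotSMulTop x M) ⟨Q, hQ.isPrime⟩ hQ hMx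
    calc ((t + 1 : ℕ) : ℕ∞) = t + 1 := by push_cast; rfl
      _ ≤ Order.coheight (⟨Q, hQ.isPrime⟩ : PrimeSpectrum S) + 1 := by gcongr
      _ ≤ _ := Order.coheight_add_one_le hlt

end LocalPart

section LocalPartTwo
universe u
variable {S : Type u} [CommRing S]

lemma bdl_exists_ass_le [IsNoetherianRing S] {M : Type*} [AddCommGroup M] [Module S M]
    [Module.Finite S M] (p : PrimeSpectrum S) (hp : p ∈ Module.support S M) :
    ∃ P : PrimeSpectrum S, P ≤ p ∧ P.asIdeal ∈ associatedPrimes S M ∧ P ∈ Module.support S M := by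
  rw [Module.mem_support_iff_of_finite] at hp
  obtain ⟨P, hP, hle⟩ := Ideal.exists_minimalPrimes_le hp
  refine ⟨⟨P, hP.1.1⟩, hle,
    Module.associatedPrimes.minimalPrimes_annihilator_subset_associatedPrimes S M hP, ?_⟩
  rw [Module.mem_support_iff_of_finite]
  exact hP.1.2

lemma bdl_G_step [IsNoetherianRing S] [IsLocalRing S] (n : ℕ)
    (hS : BdlDepthGE (maximalIdeal S) n S)
    (hdim : ∀ q : PrimeSpectrum S, Order.height q + Order.coheight q ≤ n)
    (Q : PrimeSpectrum S) (k : ℕ) : (k : ℕ∞) ≤ Order.height Q → k ≤ n →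
    ∃ (M : Type u) (_ : AddCommGroup M) (_ : Module S M) (_ : Module.Finite S M),
      Q ∈ Module.support S M ∧ BdlDepthGE (maximalIdeal S) (n - k) M ∧
      ∀ p ∈ Module.support S M, (k : ℕ∞) ≤ Order.height p := by
  induction k with
  | zero =>
    intro _ _
    refine ⟨S, inferInstance, inferInstance, inferInstance, ?_, by simpa using hS, by simp⟩
    rw [Module.mem_support_iff_of_finite, Module.annihilator_eq_bot.2 inferInstance]
    exact bot_le
  | succ k ih =>
    intro hk hkn
    have hlt : (k : ℕ∞) < Order.height Q :=
      lt_of_lt_of_le (by exact_mod_cast Nat.lt_succ_self k) hk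
    obtain ⟨M, _, _, _, hQ, hd, hh⟩ := ih hlt.le (by omega)
    obtain ⟨g, hgQ, hg⟩ : ∃ g ∈ Q.asIdeal, ∀ P ∈ associatedPrimes S M, g ∉ P := by
      by_contra! hcon
      have hsub : (Q.asIdeal : Set S) ⊆
          ⋃ P ∈ associatedPrimes S M, ((id P : Ideal S) : Set S) := by
        intro g hg
        obtain ⟨P, hP, hgP⟩ := hcon g hg
        exact Set.mem_biUnion hP hgP
      obtain ⟨P, hP, hle⟩ := (Ideal.subset_union_prime_finite (associatedPrimes.finite S _) ⊤ ⊤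
        (fun P hP _ _ => hP.1)).1 hsub
      have h1 := bdl_depth_le_coheight (n - k) M ⟨P, hP.1⟩ hP hd
      have h2 : Order.height Q ≤ Order.height (⟨P, hP.1⟩ : PrimeSpectrum S) :=
        Order.height_mono hle
      have h3 := hdim ⟨P, hP.1⟩
      have h4 : ((k + 1 : ℕ) : ℕ∞) + ((n - k : ℕ) : ℕ∞) ≤ n :=
        (add_le_add (hk.trans h2) h1).trans h3
      have h5 : k + 1 + (n - k) ≤ n := by exact_mod_cast h4
      omega
    have hgm : g ∈ maximalIdeal S := le_maximalIdeal Q.2.ne_top hgQ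
    have hgr : IsSMulRegular M g := bdl_regular_of_notMem hg
    refine ⟨QuotSMulTop g M, inferInstance, inferInstance, inferInstance, ?_, ?_, ?_⟩
    · rw [Module.support_quotSMulTop]
      exact ⟨hQ, by simpa [PrimeSpectrum.mem_zeroLocus] using hgQ⟩
    · refine BdlDepthGE.quot _ M g hgm hgr ?_
      rwa [show n - (k + 1) + 1 = n - k by omega]
    · intro p hp
      rw [Module.support_quotSMulTop] at hp
      obtain ⟨P, hPp, hP, hPs⟩ := bdl_exists_ass_le p hp.1
      have hne : P < p := by
        refine lt_of_le_of_ne hPp ?_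
        rintro rfl
        exact hg _ hP (by simpa [PrimeSpectrum.mem_zeroLocus] using hp.2)
      calc ((k + 1 : ℕ) : ℕ∞) = k + 1 := by push_cast; rfl
        _ ≤ Order.height P + 1 := by gcongr; exact hh P hPs
        _ ≤ _ := Order.height_add_one_le hne

lemma bdl_G [IsNoetherianRing S] [IsLocalRing S] (n : ℕ)
    (hS : BdlDepthGE (maximalIdeal S) n S)
    (hdim : ∀ q : PrimeSpectrum S, Order.height q + Order.coheight q ≤ n)
    (Q : PrimeSpectrum S) : (n : ℕ∞) ≤ Order.height Q + Order.coheight Q := by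
  have hQn : Order.height Q ≤ n := le_self_add.trans (hdim Q)
  obtain ⟨h, hh⟩ := ENat.ne_top_iff_exists.1 (ne_top_of_le_ne_top (ENat.natCast_ne_top n) hQn)
  have hhn : h ≤ n := by rw [← hh] at hQn; exact_mod_cast hQn
  obtain ⟨M, _, _, _, hQ, hd, hs⟩ := bdl_G_step n hS hdim Q h hh.le hhn
  obtain ⟨P, hPp, hP, hPs⟩ := bdl_exists_ass_le Q hQ
  have hPQ : P = Q := by
    by_contra hne
    have h1 := Order.height_add_one_le (lt_of_le_of_ne hPp hne)
    have h2 := hs P hPs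
    rw [← hh] at h1
    have h3 : ((h : ℕ∞) + 1) ≤ h := (add_le_add_left h2 1).trans h1
    have : h + 1 ≤ h := by exact_mod_cast h3
    omega
  subst hPQ
  have h1 := bdl_depth_le_coheight (n - h) M P hP hd
  rw [← hh]
  calc (n : ℕ∞) = (h : ℕ∞) + ((n - h : ℕ) : ℕ∞) := by norm_cast; omega
    _ ≤ _ := by gcongr
end LocalPartTwo

section PolyPart
variable {n : ℕ}

lemma bdl_hom_aux (J : Ideal (MvPolynomial (Fin n) K)) (hJ : IsHomogeneousIdeal J)
    (r u : MvPolynomial (Fin n) K) (hr : coeff 0 r ≠ 0) (hru : r * u ∈ J) : u ∈ J := by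
  have key : ∀ k, homogeneousComponent k u ∈ J := by
    intro k
    induction k using Nat.strong_induction_on with
    | _ k ih =>
      set w : MvPolynomial (Fin n) K := ∑ j ∈ Finset.range k, homogeneousComponent j u with hw
      have hwJ : w ∈ J := Ideal.sum_mem _ fun j hj => ih j (Finset.mem_range.1 hj)
      have hc : ∀ b : Fin n →₀ ℕ, b.degree < k → coeff b (u - w) = 0 := by
        intro b hb
        rw [coeff_sub, hw, coeff_sum]
        simp only [coeff_homogeneousComponent]
        rw [Finset.sum_ite_eq]
        simp [hb]
      have hc' : ∀ b : Fin n →₀ ℕ, b.degree = k → coeff b (u - w) = coeff b u := by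
        intro b hb
        rw [coeff_sub, hw, coeff_sum]
        simp only [coeff_homogeneousComponent]
        rw [Finset.sum_ite_eq]
        simp [hb]
      have h1 : homogeneousComponent k (r * (u - w)) ∈ J := by
        apply hJ
        rw [mul_sub]
        exact Ideal.sub_mem _ hru (Ideal.mul_mem_left _ _ hwJ)
      have h2 : homogeneousComponent k (r * (u - w)) =
          C (coeff 0 r) * homogeneousComponent k u := by
        ext b
        rw [coeff_C_mul, coeff_homogeneousComponent, coeff_homogeneousComponent]
        split_ifs with hb
        · rw [coeff_mul, Finset.sum_eq_single (0, b)]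
          · rw [hc' b hb]
          · rintro ⟨x, y⟩ hxy hne
            rw [Finset.HasAntidiagonal.mem_antidiagonal] at hxy
            simp only at hxy ⊢
            rw [hc y, mul_zero]
            have hx : x ≠ 0 := by
              rintro rfl
              rw [zero_add] at hxy
              exact hne (by rw [hxy])
            have : x.degree ≠ 0 := by rwa [Ne, Finsupp.degree_eq_zero_iff]
            have h3 : x.degree + y.degree = k := by rw [← hb, ← hxy]; simp
            omega
          · simp
        · simp
      rw [h2] at h1
      have h3 := Ideal.mul_mem_left J (C (coeff 0 r)⁻¹) h1
      rwa [← mul_assoc, ← C_mul, inv_mul_cancel₀ hr, C_1, one_mul] at h3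
  rw [← sum_homogeneousComponent u]
  exact Ideal.sum_mem _ fun j _ => key j

/-- the irrelevant ideal -/
noncomputable def bdlM (K : Type*) [Field K] (n : ℕ) : Ideal (MvPolynomial (Fin n) K) :=
  Ideal.span (Set.range X)

lemma bdl_mem_M (p : MvPolynomial (Fin n) K) : p ∈ bdlM K n ↔ coeff 0 p = 0 := by
  rw [bdlM, ← Set.image_univ, mem_ideal_span_X_image]
  constructor
  · intro h
    by_contra h0
    obtain ⟨i, -, hi⟩ := h 0 (mem_support_iff.2 h0)
    simp at hi
  · intro h m hm
    by_contra! hcon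
    have : m = 0 := by ext i; simpa using hcon i
    subst this
    exact mem_support_iff.1 hm h

instance bdlM_isPrime : (bdlM K n).IsPrime := by
  have : bdlM K n = RingHom.ker (constantCoeff (σ := Fin n) (R := K)) := by
    ext p
    rw [bdl_mem_M, RingHom.mem_ker, constantCoeff_eq]
  rw [this]
  exact RingHom.ker_isPrime _

lemma bdl_ass_le_M (J : Ideal (MvPolynomial (Fin n) K)) (hJ : IsHomogeneousIdeal J)
    (P : Ideal (MvPolynomial (Fin n) K))
    (hP : P ∈ associatedPrimes (MvPolynomial (Fin n) K) (MvPolynomial (Fin n) K ⧸ J)) :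
    P ≤ bdlM K n := by
  intro r hr
  rw [bdl_mem_M]
  by_contra h0
  obtain ⟨hPp, q, hq⟩ := isAssociatedPrime_iff.1 hP
  obtain ⟨u, rfl⟩ := Submodule.Quotient.mk_surjective _ q
  have hmem : ∀ s, s ∈ P ↔ s * u ∈ J := by
    intro s
    rw [hq, Submodule.mem_colon_singleton, Submodule.mem_bot, ← Submodule.Quotient.mk_smul,
      Submodule.Quotient.mk_eq_zero, smul_eq_mul]
  have hu : u ∈ J := bdl_hom_aux J hJ r u h0 ((hmem r).1 hr)
  apply hPp.ne_top
  rw [Ideal.eq_top_iff_one, hmem, one_mul]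
  exact hu

lemma bdl_hom_sup (A : Ideal (MvPolynomial (Fin n) K)) (hA : IsHomogeneousIdeal A)
    (f : MvPolynomial (Fin n) K) (d : ℕ) (hf : f.IsHomogeneous d) :
    IsHomogeneousIdeal (A ⊔ Ideal.span {f}) := by
  intro p hp k
  obtain ⟨a, ha, b, hb, rfl⟩ := Submodule.mem_sup.1 hp
  rw [map_add]
  refine Ideal.add_mem _ (Ideal.mem_sup_left (hA a ha k)) (Ideal.mem_sup_right ?_)
  obtain ⟨g, rfl⟩ := Ideal.mem_span_singleton'.1 hb
  rw [← sum_homogeneousComponent g, Finset.sum_mul, map_sum]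
  refine Ideal.sum_mem _ fun j _ => ?_
  have hh : (homogeneousComponent j g * f).IsHomogeneous (j + d) :=
    (homogeneousComponent_isHomogeneous j g).mul hf
  rw [homogeneousComponent_of_mem hh]
  split_ifs
  · exact Ideal.mul_mem_left _ _ (Ideal.mem_span_singleton_self f)
  · exact Ideal.zero_mem _

lemma bdl_X_regular : IsWeaklyRegular (MvPolynomial (Fin n) K)
    (List.ofFn (X : Fin n → MvPolynomial (Fin n) K)) := by
  rw [isWeaklyRegular_iff_Fin]
  rintro ⟨i, hi⟩
  rw [List.length_ofFn] at hi
  have hset : Ideal.ofList (List.take i (List.ofFn (X : Fin n → MvPolynomial (Fin n) K))) =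
      Ideal.span (X '' {j : Fin n | j.1 < i}) := by
    unfold Ideal.ofList
    congr 1
    ext p
    simp only [Set.mem_ofPred_eq, Set.mem_image, List.mem_take_iff_getElem, List.getElem_ofFn,
      List.length_ofFn]
    constructor
    · rintro ⟨j, hj, rfl⟩
      exact ⟨⟨j, by omega⟩, by simp; omega, rfl⟩
    · rintro ⟨j, hj, rfl⟩
      exact ⟨j, by omega, rfl⟩
  rw [hset, isSMulRegular_iff_right_eq_zero_of_smul]
  intro q hq
  obtain ⟨u, rfl⟩ := Submodule.Quotient.mk_surjective _ q
  rw [← Submodule.Quotient.mk_smul, Submodule.Quotient.mk_eq_zero] at hq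
  rw [Submodule.Quotient.mk_eq_zero]
  rw [smul_eq_mul, Ideal.mul_top, mem_ideal_span_X_image] at hq ⊢
  intro m hm
  simp only [Fin.getElem_fin, List.getElem_ofFn, smul_eq_mul] at hq
  obtain ⟨j, hj, hj0⟩ := hq (Finsupp.single ⟨i, hi⟩ 1 + m) (by
    rw [mem_support_iff, coeff_X_mul]
    exact mem_support_iff.1 hm)
  refine ⟨j, hj, ?_⟩
  have hne : j ≠ ⟨i, hi⟩ := by rintro rfl; simp at hj
  simpa [Finsupp.single_apply, hne.symm] using hj0

end PolyPart

section PolyPartTwo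
variable {n : ℕ}

/-- the local ring at the irrelevant ideal -/
abbrev BdlS (K : Type*) [Field K] (n : ℕ) := Localization.AtPrime (bdlM K n)

lemma bdl_map_mem (p : MvPolynomial (Fin n) K) (hp : p ∈ bdlM K n) :
    algebraMap (MvPolynomial (Fin n) K) (BdlS K n) p ∈ maximalIdeal (BdlS K n) := by
  exact (IsLocalization.AtPrime.to_map_mem_maximal_iff (BdlS K n) (bdlM K n) p).2 hp

lemma bdl_S_depth : BdlDepthGE (maximalIdeal (BdlS K n)) n (BdlS K n) := by
  refine ⟨_, ?_, ?_, (bdl_X_regular (K := K) (n := n)).of_isLocalization (BdlS K n)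
    (bdlM K n).primeCompl⟩
  · simp
  · intro r hr
    obtain ⟨p, hp, rfl⟩ := List.mem_map.1 hr
    obtain ⟨i, rfl⟩ := (List.mem_ofFn' _ _).1 hp
    exact bdl_map_mem _ (Ideal.subset_span ⟨i, rfl⟩)

lemma bdl_R_dim (q : PrimeSpectrum (MvPolynomial (Fin n) K)) :
    Order.height q + Order.coheight q ≤ n := by
  have h : ringKrullDim (MvPolynomial (Fin n) K) = n := by
    rw [MvPolynomial.ringKrullDim_of_isNoetherianRing, ringKrullDim_eq_zero_of_field]
    simp
  rw [ringKrullDim, Order.krullDim_eq_iSup_height_add_coheight_of_nonempty] at h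
  have h2 : (⨆ a : PrimeSpectrum (MvPolynomial (Fin n) K),
    Order.height a + Order.coheight a) = (n : ℕ∞) := by exact_mod_cast h
  rw [← h2]
  exact le_iSup (fun a : PrimeSpectrum (MvPolynomial (Fin n) K) =>
    Order.height a + Order.coheight a) q

lemma bdl_comap_strictMono : StrictMono
    (PrimeSpectrum.comap (algebraMap (MvPolynomial (Fin n) K) (BdlS K n))) := by
  apply Monotone.strictMono_of_injective
  · intro a b hab
    exact Ideal.comap_mono hab
  · exact PrimeSpectrum.localization_comap_injective _ (bdlM K n).primeCompl

lemma bdl_S_height (q : PrimeSpectrum (BdlS K n)) : Order.height q =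
    Order.height (PrimeSpectrum.comap (algebraMap (MvPolynomial (Fin n) K) (BdlS K n)) q) := by
  rw [← PrimeSpectrum.height_eq_orderHeight, ← PrimeSpectrum.height_eq_orderHeight,
    ← IsLocalization.height_under (bdlM K n).primeCompl]
  rfl

lemma bdl_S_coheight (q : PrimeSpectrum (BdlS K n)) : Order.coheight q ≤
    Order.coheight (PrimeSpectrum.comap (algebraMap (MvPolynomial (Fin n) K) (BdlS K n)) q) :=
  Order.coheight_le_coheight_apply_of_strictMono _ bdl_comap_strictMono q

lemma bdl_S_dim (q : PrimeSpectrum (BdlS K n)) :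
    Order.height q + Order.coheight q ≤ n :=
  (add_le_add (bdl_S_height q).le (bdl_S_coheight q)).trans (bdl_R_dim _)

lemma bdl_S_lift (Q : PrimeSpectrum (MvPolynomial (Fin n) K)) (hQ : Q.asIdeal ≤ bdlM K n) :
    ∃ q : PrimeSpectrum (BdlS K n),
      PrimeSpectrum.comap (algebraMap (MvPolynomial (Fin n) K) (BdlS K n)) q = Q := by
  have : Q ∈ Set.range (PrimeSpectrum.comap (algebraMap (MvPolynomial (Fin n) K) (BdlS K n))) := by
    rw [PrimeSpectrum.localization_comap_range _ (bdlM K n).primeCompl]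
    change Disjoint _ _
    rw [Set.disjoint_left]
    intro x hx hx'
    exact hx (hQ hx')
  exact this

lemma bdl_R_dim_ge (Q : PrimeSpectrum (MvPolynomial (Fin n) K)) (hQ : Q.asIdeal ≤ bdlM K n) :
    (n : ℕ∞) ≤ Order.height Q + Order.coheight Q := by
  obtain ⟨q, rfl⟩ := bdl_S_lift Q hQ
  exact (bdl_G n bdl_S_depth bdl_S_dim q).trans
    (add_le_add (bdl_S_height q).le (bdl_S_coheight q))

lemma bdl_coheight_le (A : Ideal (MvPolynomial (Fin n) K)) (s : ℕ)
    (hs : (s : WithBot ℕ∞) = ringKrullDim (MvPolynomial (Fin n) K ⧸ A))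
    (Q : PrimeSpectrum (MvPolynomial (Fin n) K)) (hQ : A ≤ Q.asIdeal) :
    Order.coheight Q ≤ s := by
  have h : (Order.coheight Q : WithBot ℕ∞) ≤ s := by
    rw [Order.coheight_eq_krullDim_Ici, hs, ringKrullDim_quotient]
    refine Order.krullDim_le_of_strictMono (fun x => ⟨x.1, ?_⟩) ?_
    · exact hQ.trans x.2
    · intro a b hab
      exact hab
  exact_mod_cast h

lemma bdl_ass_coheight_gen {R : Type*} [CommRing R] [IsNoetherianRing R] (m : Ideal R) [m.IsPrime]
    (N : Type*) [AddCommGroup N] [Module R N] [Module.Finite R N] (s : ℕ)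
    (rs : List R) (hlen : rs.length = s + 1) (hrs : ∀ r ∈ rs, r ∈ m)
    (hreg : IsWeaklyRegular N rs) (f : R) (hf : IsSMulRegular N f) (hfm : f ∈ m)
    (p : PrimeSpectrum (Localization.AtPrime m))
    (hP : p.asIdeal.comap (algebraMap R (Localization.AtPrime m)) ∈
      associatedPrimes R (QuotSMulTop f N)) :
    (s : ℕ∞) ≤ Order.coheight p := by
  have hmap : ∀ x ∈ m, algebraMap R (Localization.AtPrime m) x ∈
      maximalIdeal (Localization.AtPrime m) := fun x hx =>
    (IsLocalization.AtPrime.to_map_mem_maximal_iff (Localization.AtPrime m) m x).2 hx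
  have : IsNoetherianRing (Localization.AtPrime m) :=
    IsLocalization.isNoetherianRing m.primeCompl _ inferInstance
  have hbc := TensorProduct.isBaseChange R N (Localization.AtPrime m)
  have : Module.Flat R (Localization.AtPrime m) := IsLocalization.flat _ m.primeCompl
  have hd : BdlDepthGE (maximalIdeal (Localization.AtPrime m)) (s + 1)
      (TensorProduct R (Localization.AtPrime m) N) := by
    refine ⟨_, ?_, ?_, hreg.of_flat_of_isBaseChange hbc⟩
    · simpa using hlen
    · intro r hr
      obtain ⟨p, hp, rfl⟩ := List.mem_map.1 hr
      exact hmap _ (hrs p hp)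
  have hfM : IsSMulRegular (TensorProduct R (Localization.AtPrime m) N)
      (algebraMap R (Localization.AtPrime m) f) :=
    hf.of_flat_of_isBaseChange hbc
  have hd2 := BdlDepthGE.quot s _ _ (hmap f hfm) hfM hd
  refine bdl_depth_le_coheight s _ p ?_ hd2
  rw [LinearEquiv.AssociatedPrimes.eq
    (QuotSMulTop.algebraMapTensorEquivTensorQuotSMulTop f N (Localization.AtPrime m))]
  have hbc2 := TensorProduct.isBaseChange R (QuotSMulTop f N) (Localization.AtPrime m)
  have := (isLocalizedModule_iff_isBaseChange m.primeCompl (Localization.AtPrime m) _).2 hbc2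
  exact
    Module.associatedPrimes.mem_associatedPrimes_of_comap_mem_associatedPrimes_of_isLocalizedModule
    m.primeCompl (TensorProduct.mk R (Localization.AtPrime m) (QuotSMulTop f N) 1) p.asIdeal hP

lemma bdl_ass_coheight (A : Ideal (MvPolynomial (Fin n) K)) (s : ℕ)
    (rs : List (MvPolynomial (Fin n) K)) (hlen : rs.length = s + 1)
    (hrs : ∀ r ∈ rs, r ∈ bdlM K n)
    (hreg : IsWeaklyRegular (MvPolynomial (Fin n) K ⧸ A) rs)
    (f : MvPolynomial (Fin n) K) (hf : IsSMulRegular (MvPolynomial (Fin n) K ⧸ A) f)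
    (hfm : f ∈ bdlM K n)
    (P : PrimeSpectrum (MvPolynomial (Fin n) K)) (hPm : P.asIdeal ≤ bdlM K n)
    (hP : P.asIdeal ∈ associatedPrimes (MvPolynomial (Fin n) K)
      (QuotSMulTop f (MvPolynomial (Fin n) K ⧸ A))) :
    (s : ℕ∞) ≤ Order.coheight P := by
  obtain ⟨p, rfl⟩ := bdl_S_lift P hPm
  refine le_trans ?_ (bdl_S_coheight p)
  exact bdl_ass_coheight_gen (bdlM K n) (MvPolynomial (Fin n) K ⧸ A) s rs hlen hrs hreg f hf hfm p hP

end PolyPartTwo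

section FinalPart

lemma bdl_idealHeight_le {R : Type*} [CommRing R] (I : Ideal R) (p : PrimeSpectrum R)
    (h : I ≤ p.asIdeal) : idealHeight I ≤ Order.height p := iInf₂_le p h

lemma bdl_idealHeight_mono {R : Type*} [CommRing R] {I J : Ideal R} (h : I ≤ J) :
    idealHeight I ≤ idealHeight J :=
  le_iInf₂ fun p hp => bdl_idealHeight_le I p (h.trans hp)

lemma bdl_idealHeight_prime {R : Type*} [CommRing R] (p : PrimeSpectrum R) :
    idealHeight p.asIdeal = Order.height p :=
  le_antisymm (bdl_idealHeight_le _ p le_rfl) (le_iInf₂ fun _ hq => Order.height_mono hq)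

/-- below every prime containing `A` there is an associated prime of `R/A` -/
lemma bdl_exists_ass {R : Type*} [CommRing R] [IsNoetherianRing R] (A : Ideal R)
    (p : PrimeSpectrum R) (hp : A ≤ p.asIdeal) :
    ∃ Q : PrimeSpectrum R, Q ≤ p ∧ A ≤ Q.asIdeal ∧ Q.asIdeal ∈ associatedPrimes R (R ⧸ A) := by
  obtain ⟨Q, h1, h2, h3⟩ := bdl_exists_ass_le (M := R ⧸ A) p (by
    rw [Module.mem_support_iff_of_finite, Ideal.annihilator_quotient]; exact hp)
  rw [Module.mem_support_iff_of_finite, Ideal.annihilator_quotient] at h3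
  exact ⟨Q, h1, h3, h2⟩

lemma bdl_exists_height_eq {R : Type*} [CommRing R] [IsNoetherianRing R] (A : Ideal R)
    (p : PrimeSpectrum R) (hp : A ≤ p.asIdeal) :
    ∃ Q : PrimeSpectrum R, A ≤ Q.asIdeal ∧ Q.asIdeal ∈ associatedPrimes R (R ⧸ A) ∧
      Order.height Q = idealHeight A := by
  have : Nonempty {q : PrimeSpectrum R // A ≤ q.asIdeal} := ⟨⟨p, hp⟩⟩
  obtain ⟨⟨q, hq⟩, hqe⟩ :=
    ciInf_mem (fun q : {q : PrimeSpectrum R // A ≤ q.asIdeal} => Order.height q.1)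
  have hqe' : Order.height q = idealHeight A := by
    rw [idealHeight, iInf_subtype']
    exact hqe
  obtain ⟨Q, h1, h2, h3⟩ := bdl_exists_ass A q hq
  exact ⟨Q, h2, h3, le_antisymm ((Order.height_mono h1).trans hqe'.le) (bdl_idealHeight_le _ _ h2)⟩

lemma bdl_lower {R : Type*} [CommRing R] [IsNoetherianRing R] (A : Ideal R) (f : R)
    (hf : IsSMulRegular (R ⧸ A) f) (p : PrimeSpectrum R) (hp : A ≤ p.asIdeal)
    (hfp : f ∈ p.asIdeal) : idealHeight A + 1 ≤ Order.height p := by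
  obtain ⟨Q, h1, h2, h3⟩ := bdl_exists_ass A p hp
  have hne : Q < p := by
    refine lt_of_le_of_ne h1 ?_
    rintro rfl
    exact bdl_notMem_of_regular hf h3 hfp
  exact (add_le_add_left (bdl_idealHeight_le A Q h2) 1).trans (Order.height_add_one_le hne)

lemma bdl_regular_of_colon {R : Type*} [CommRing R] (A : Ideal R) (f : R)
    (h : ∀ r, r * f ∈ A → r ∈ A) : IsSMulRegular (R ⧸ A) f := by
  rw [isSMulRegular_iff_right_eq_zero_of_smul]
  intro q hq
  obtain ⟨u, rfl⟩ := Submodule.Quotient.mk_surjective _ q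
  rw [← Submodule.Quotient.mk_smul, Submodule.Quotient.mk_eq_zero, smul_eq_mul, mul_comm] at hq
  rw [Submodule.Quotient.mk_eq_zero]
  exact h u hq

/-- `(R/A)/f ≃ R/(A + f)` -/
noncomputable def bdlQuotEquiv {R : Type*} [CommRing R] (A : Ideal R) (f : R) :
    QuotSMulTop f (R ⧸ A) ≃ₗ[R] R ⧸ (A ⊔ Ideal.span {f}) :=
  have h : f • (⊤ : Submodule R (R ⧸ A)) = (f • (⊤ : Submodule R R)).map (Submodule.mkQ A) := by
    rw [Submodule.map_pointwise_smul, Submodule.map_top, Submodule.range_mkQ]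
  have h2 : f • (⊤ : Submodule R R) = Ideal.span {f} := by
    ext x
    rw [bdl_mem_smul_top, Ideal.mem_span_singleton]
    rfl
  Submodule.quotEquivOfEq _ _ h ≪≫ₗ Submodule.quotientQuotientEquivQuotientSup _ _ ≪≫ₗ
    Submodule.quotEquivOfEq _ _ (by rw [h2])

lemma bdl_ass_union {R : Type*} [CommRing R] (A B : Ideal R) (hAB : A ≤ B) (f : R)
    (h : ∀ r, r * f ∈ A → r ∈ A) :
    associatedPrimes R (R ⧸ (A ⊔ Ideal.span {f} * B)) ⊆
      associatedPrimes R (R ⧸ B) ∪ associatedPrimes R (R ⧸ (A ⊔ Ideal.span {f})) := by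
  have hle1 : B ≤ Submodule.comap (LinearMap.lsmul R R f) (A ⊔ Ideal.span {f} * B) := by
    intro b hb
    exact Ideal.mem_sup_right (Ideal.mul_mem_mul (Ideal.mem_span_singleton_self f) hb)
  have hle2 : (A ⊔ Ideal.span {f} * B) ≤ (A ⊔ Ideal.span {f}) :=
    sup_le_sup_left Ideal.mul_le_left A
  refine associatedPrimes.subset_union_of_exact
    (f := Submodule.mapQ B (A ⊔ Ideal.span {f} * B) (LinearMap.lsmul R R f) hle1)
    (g := Submodule.factor hle2) ?_ ?_
  · rw [injective_iff_map_eq_zero]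
    intro q hq
    obtain ⟨u, rfl⟩ := Submodule.Quotient.mk_surjective _ q
    rw [Submodule.mapQ_apply, Submodule.Quotient.mk_eq_zero] at hq
    rw [Submodule.Quotient.mk_eq_zero]
    obtain ⟨a, ha, c, hc, hac⟩ := Submodule.mem_sup.1 hq
    obtain ⟨b, hb, rfl⟩ := Ideal.mem_span_singleton_mul.1 hc
    have h1 : (u - b) * f = a := by
      simp only [LinearMap.lsmul_apply, smul_eq_mul] at hac
      linear_combination -hac
    have h2 := hAB (h (u - b) (by rw [h1]; exact ha))
    have := Ideal.add_mem _ h2 hb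
    rwa [sub_add_cancel] at this
  · intro q
    obtain ⟨u, rfl⟩ := Submodule.Quotient.mk_surjective _ q
    constructor
    · intro hq
      have hu : u ∈ A ⊔ Ideal.span {f} := (Submodule.Quotient.mk_eq_zero _).1 hq
      obtain ⟨a, ha, c, hc, hac⟩ := Submodule.mem_sup.1 hu
      obtain ⟨g, rfl⟩ := Ideal.mem_span_singleton'.1 hc
      refine ⟨Submodule.Quotient.mk g, ?_⟩
      rw [Submodule.mapQ_apply, Submodule.Quotient.eq]
      refine Ideal.mem_sup_left ?_
      have : (LinearMap.lsmul R R f) g - u = -a := by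
        simp only [LinearMap.lsmul_apply, smul_eq_mul]
        linear_combination hac
      rw [this]
      exact neg_mem ha
    · rintro ⟨v, hv⟩
      obtain ⟨v, rfl⟩ := Submodule.Quotient.mk_surjective _ v
      rw [← hv, Submodule.mapQ_apply]
      refine (Submodule.Quotient.mk_eq_zero _).2 ?_
      refine Ideal.mem_sup_right ?_
      exact Ideal.mul_mem_right _ _ (Ideal.mem_span_singleton_self f)

/-- lifting the Cohen-Macaulay sequence to the ambient ring -/
lemma bdl_lift_seq {R : Type*} [CommRing R] (A m : Ideal R) (rs : List (R ⧸ A))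
    (h : ∀ x ∈ rs, x ∈ m.map (Ideal.Quotient.mk A)) (hreg : IsWeaklyRegular (R ⧸ A) rs) :
    ∃ ts : List R, ts.length = rs.length ∧ (∀ t ∈ ts, t ∈ m) ∧ IsWeaklyRegular (R ⧸ A) ts := by
  have : ∃ ts : List R, (∀ t ∈ ts, t ∈ m) ∧ ts.map (algebraMap R (R ⧸ A)) = rs := by
    clear hreg
    induction rs with
    | nil => exact ⟨[], by simp, rfl⟩
    | cons x rs ih =>
      obtain ⟨ts, h1, h2⟩ := ih fun y hy => h y (by simp [hy])
      obtain ⟨t, ht, rfl⟩ := (Ideal.mem_map_iff_of_surjective _ Ideal.Quotient.mk_surjective).1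
        (h x (by simp))
      refine ⟨t :: ts, by simpa [ht] using h1, ?_⟩
      rw [List.map_cons, h2]
      rfl
  obtain ⟨ts, h1, rfl⟩ := this
  exact ⟨ts, by simp, h1, (isWeaklyRegular_map_algebraMap_iff (R ⧸ A) (R ⧸ A) ts).1 hreg⟩

lemma bdl_upper {n : ℕ} (A : Ideal (MvPolynomial (Fin n) K)) (hA : IsHomogeneousIdeal A)
    (f : MvPolynomial (Fin n) K) (d : ℕ) (hf : f.IsHomogeneous d)
    (hreg : IsSMulRegular (MvPolynomial (Fin n) K ⧸ A) f)
    (hCM : QuotientIsCohenMacaulay A)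
    (P : PrimeSpectrum (MvPolynomial (Fin n) K))
    (hP : P.asIdeal ∈ associatedPrimes (MvPolynomial (Fin n) K)
      (MvPolynomial (Fin n) K ⧸ (A ⊔ Ideal.span {f})))
    (hle : A ⊔ Ideal.span {f} ≤ P.asIdeal) :
    Order.height P ≤ idealHeight A + 1 := by
  have hPm := bdl_ass_le_M _ (bdl_hom_sup A hA f d hf) _ hP
  obtain ⟨rs, h1, h2, h3⟩ := hCM
  obtain ⟨ts, hlen, htm, htr⟩ := bdl_lift_seq A (bdlM K n) rs h1 h2.toIsWeaklyRegular
  rw [← hlen] at h3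
  obtain ⟨Q, hAQ, hQa, hQh⟩ := bdl_exists_height_eq A P (le_sup_left.trans hle)
  have hQm := bdl_ass_le_M A hA _ hQa
  have hco := bdl_coheight_le A _ h3 Q hAQ
  have hn : (n : ℕ∞) ≤ idealHeight A + ts.length := by
    rw [← hQh]
    exact (bdl_R_dim_ge Q hQm).trans (by gcongr)
  have hfP : f ∈ P.asIdeal := hle (Ideal.mem_sup_right (Ideal.mem_span_singleton_self f))
  have hPn := bdl_R_dim P
  rcases hl : ts.length with _ | t
  · rw [hl] at hn
    simp only [Nat.cast_zero, add_zero] at hn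
    exact (le_self_add.trans hPn).trans (hn.trans le_self_add)
  · have ht : (t : ℕ∞) ≤ Order.coheight P :=
      bdl_ass_coheight A t ts hl htm htr f hreg (hPm hfP) P hPm
        (by rw [LinearEquiv.AssociatedPrimes.eq (bdlQuotEquiv A f)]; exact hP)
    have h4 : Order.height P + t ≤ (idealHeight A + 1) + t := by
      calc Order.height P + t ≤ Order.height P + Order.coheight P := by gcongr
        _ ≤ n := hPn
        _ ≤ idealHeight A + ts.length := hn
        _ = _ := by rw [hl]; push_cast; ring
    exact (ENat.add_le_add_iff_right (ENat.natCast_ne_top t)).1 h4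

end FinalPart

theorem basicDoubleLink_height_unmixed {n : ℕ}
    (A B : Ideal (MvPolynomial (Fin n) K))
    (hA : IsHomogeneousIdeal A) (hB : IsHomogeneousIdeal B) (hAB : A ≤ B)
    (hht : idealHeight A + 1 = idealHeight B)
    (f : MvPolynomial (Fin n) K) (d : ℕ) (hf : f.IsHomogeneous d)
    (hcolon : Submodule.colon A (Ideal.span {f}) = A)
    (C : Ideal (MvPolynomial (Fin n) K)) (hC : C = A ⊔ Ideal.span {f} * B) :
    idealHeight C = idealHeight B ∧
      (IsUnmixed B → QuotientIsCohenMacaulay A → IsUnmixed C) := by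
  have hnzd : ∀ r, r * f ∈ A → r ∈ A := by
    intro r hr
    rw [← hcolon, Submodule.mem_colon]
    intro s hs
    obtain ⟨g, rfl⟩ := Ideal.mem_span_singleton'.1 hs
    rw [smul_eq_mul, mul_left_comm]
    exact Ideal.mul_mem_left _ _ hr
  have hreg := bdl_regular_of_colon A f hnzd
  have hheight : idealHeight C = idealHeight B := by
    apply le_antisymm
    · apply bdl_idealHeight_mono
      rw [hC]
      exact sup_le hAB Ideal.mul_le_right
    · refine le_iInf₂ fun p hp => ?_
      have hAp : A ≤ p.asIdeal := le_sup_left.trans (hC ▸ hp)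
      have hfB : Ideal.span {f} * B ≤ p.asIdeal := le_sup_right.trans (hC ▸ hp)
      rcases p.2.mul_le.1 hfB with h | h
      · rw [← hht]
        exact bdl_lower A f hreg p hAp (h (Ideal.mem_span_singleton_self f))
      · exact bdl_idealHeight_le B p h
  refine ⟨hheight, fun hBu hCM P hP => ?_⟩
  rw [hheight]
  rw [hC] at hP
  rcases bdl_ass_union A B hAB f hnzd hP with h | h
  · exact hBu P h
  · have hPp : P.IsPrime := h.1
    have hle : A ⊔ Ideal.span {f} ≤ P := by
      have := IsAssociatedPrime.annihilator_le h
      rwa [Submodule.annihilator_top, Ideal.annihilator_quotient] at this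
    have e := bdl_idealHeight_prime (⟨P, hPp⟩ : PrimeSpectrum (MvPolynomial (Fin n) K))
    simp only at e
    rw [e, ← hht]
    apply le_antisymm
    · exact bdl_upper A hA f d hf hreg hCM ⟨P, hPp⟩ h hle
    · exact bdl_lower A f hreg ⟨P, hPp⟩ (le_sup_left.trans hle)
        (hle (Ideal.mem_sup_right (Ideal.mem_span_singleton_self f)))
end
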